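/- arXiv:0801.4285 — 3 statements merged into one kernel-verified Lean document; each statement's English description precedes it below -/
import Mathlib

section
/- Let T > 0. For every measurable function v : [0,T] → {-1,1}, the cost J(v) = ∫₀ᵀ (∫₀ᵗ v_s ds)² dt is strictly positive. In particular, no strict control attains the infimum value 0 of the cost. -/
open MeasureTheory intervalIntegral Set

/-! By the Lebesgue differentiation theorem a primitive recovers its integrand almost everywhere,
so a control which is nonzero on a set of positive measure has a trajectory that leaves `0`. The
trajectory is continuous, hence nonzero on a whole interval, and the cost is positive. -/

section Primitive

variable {E : Type*} [NormedAddCommGroup E] {f : ℝ → E} {a b : ℝ}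

theorem intervalIntegrable_of_forall_norm_le {μ : Measure ℝ} [IsLocallyFiniteMeasure μ] {C : ℝ}
    (hf : AEStronglyMeasurable f (μ.restrict (uIoc a b))) (hC : ∀ t ∈ uIoc a b, ‖f t‖ ≤ C) :
    IntervalIntegrable f μ a b :=
  intervalIntegrable_const.mono_fun' hf ((ae_restrict_mem measurableSet_uIoc).mono hC)

variable [NormedSpace ℝ E] [CompleteSpace E]

theorem ae_eq_zero_of_forall_primitive_eq_zero (hf : IntervalIntegrable f volume a b)
    (hzero : ∀ t ∈ uIoo a b, ∫ s in a..t, f s = 0) :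
    f =ᵐ[volume.restrict (uIoc a b)] 0 := by
  have huIoo : uIoo a b =ᵐ[volume] uIoc a b := Ioo_ae_eq_Ioc
  rw [← Measure.restrict_congr_set huIoo]
  filter_upwards [ae_restrict_of_ae hf.ae_hasDerivAt_integral,
    ae_restrict_mem measurableSet_Ioo] with t hderiv ht
  have hderiv_f : HasDerivAt (fun u ↦ ∫ s in a..u, f s) (f t) t :=
    hderiv (uIoo_subset_uIcc_self ht) a left_mem_uIcc
  have hlocal : (fun u ↦ ∫ s in a..u, f s) =ᶠ[nhds t] fun _ ↦ 0 :=
    Filter.eventually_of_mem (Ioo_mem_nhds ht.1 ht.2) hzero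
  exact hderiv_f.unique ((hasDerivAt_const t 0).congr_of_eventuallyEq hlocal)

theorem cost_strict_control_pos_general (n : ℕ) (hf : IntervalIntegrable f volume a b)
    (hne : ¬ f =ᵐ[volume.restrict (Ioc a b)] 0) :
    0 < ∫ t in a..b, ‖∫ s in a..t, f s‖ ^ n := by
  have hab : a < b := by
    by_contra! hba
    exact hne (by simp [Ioc_eq_empty_of_le hba, Filter.EventuallyEq])
  have hcont : ContinuousOn (fun t ↦ ‖∫ s in a..t, f s‖ ^ n) (Icc a b) :=
    uIcc_of_le hab.le ▸ (continuousOn_primitive_interval' hf left_mem_uIcc).norm.pow n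
  obtain ⟨t, ht, hleaves⟩ : ∃ t ∈ uIoo a b, ∫ s in a..t, f s ≠ 0 := by
    by_contra! hzero
    exact hne (uIoc_of_le hab.le ▸ ae_eq_zero_of_forall_primitive_eq_zero hf hzero)
  rw [uIoo_of_lt hab] at ht
  exact intervalIntegral.integral_pos hab hcont (fun _ _ ↦ by positivity)
    ⟨t, Ioo_subset_Icc_self ht, by positivity⟩

end Primitive

theorem not_ae_restrict_eq_zero_of_forall_ne_zero {α M : Type*} [MeasurableSpace α] [Zero M]
    {μ : Measure α} {s : Set α} {f : α → M} (hs : MeasurableSet s) (hμs : μ s ≠ 0)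
    (hne : ∀ x ∈ s, f x ≠ 0) : ¬ f =ᵐ[μ.restrict s] 0 := by
  intro hzero
  have : (ae (μ.restrict s)).NeBot := ae_restrict_neBot.2 hμs
  obtain ⟨x, hx, hxs⟩ := (hzero.and (ae_restrict_mem hs)).exists
  exact hne x hxs hx

/-- A strict control on `[0, T]`: a measurable function with values in `{-1, 1}` there. It is
encoded as a measurable function on `ℝ` whose values outside `[0, T]` are unconstrained. -/
structure IsStrictControl (T : ℝ) (v : ℝ → ℝ) : Prop where
  measurable : Measurable v
  eq_neg_one_or_eq_one : ∀ t ∈ Icc 0 T, v t = -1 ∨ v t = 1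

namespace IsStrictControl

variable {T : ℝ} {v : ℝ → ℝ}

theorem norm_eq_one (hv : IsStrictControl T v) {t : ℝ} (ht : t ∈ Icc 0 T) : ‖v t‖ = 1 := by
  rcases hv.eq_neg_one_or_eq_one t ht with h | h <;> simp [h]

theorem intervalIntegrable (hv : IsStrictControl T v) (hT : 0 ≤ T) :
    IntervalIntegrable v volume 0 T :=
  intervalIntegrable_of_forall_norm_le hv.measurable.aestronglyMeasurable fun _ ht ↦
    (hv.norm_eq_one (uIcc_of_le hT ▸ uIoc_subset_uIcc ht)).le

theorem not_ae_eq_zero (hv : IsStrictControl T v) (hT : 0 < T) :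
    ¬ v =ᵐ[volume.restrict (Ioc 0 T)] 0 :=
  not_ae_restrict_eq_zero_of_forall_ne_zero measurableSet_Ioc (by simpa using hT) fun _ ht ↦
    norm_ne_zero_iff.1 (hv.norm_eq_one (Ioc_subset_Icc_self ht) ▸ one_ne_zero)

end IsStrictControl

/-- For every measurable strict control `v : [0,T] → {-1,1}`, the
cost `J(v) = ∫₀ᵀ (∫₀ᵗ v_s ds)² dt` is strictly positive; hence no strict
control attains the infimum value `0` of the cost. -/
theorem cost_strict_control_pos (T : ℝ) (hT : 0 < T) (v : ℝ → ℝ)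
    (hv : Measurable v) (hval : ∀ t ∈ Set.Icc (0 : ℝ) T, v t = -1 ∨ v t = 1) :
    0 < ∫ t in (0 : ℝ)..T, (∫ s in (0 : ℝ)..t, v s) ^ 2 := by
  have hstrict : IsStrictControl T v := ⟨hv, hval⟩
  simpa using cost_strict_control_pos_general 2 (hstrict.intervalIntegrable hT.le)
    (hstrict.not_ae_eq_zero hT)
end

section
/- Let T > 0 and, for each natural number n ≥ 1, define the control vⁿ : [0,T] → {-1,1} by vⁿ_t = (-1)^k whenever kT/n ≤ t < (k+1)T/n, for 0 ≤ k ≤ n-1. Then the cost satisfies J(vⁿ) = ∫₀ᵀ (∫₀ᵗ vⁿ_s ds)² dt ≤ T³/n². In particular J(vⁿ) → 0 as n → ∞. -/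
open MeasureTheory intervalIntegral Set Filter

/-!
Between two consecutive switching times the trajectory is affine, so it moves along the segment
joining its values at those times and stays in any convex set containing all of these values. For
the alternating control with mesh `h = T / n` the values at the switching times are `h` times the
partial sums of `1 - 1 + 1 - ⋯`, hence `|x_t| ≤ h` on `[0, T]` and `J(vⁿ) ≤ T h²`.
-/

/-- `f` is a step function with nodes `a 0, …, a n` and values `c 0, …, c (n - 1)`. Its values at
the nodes are left free, since they do not affect its integrals. -/
def IsStepOn {E : Type*} (f : ℝ → E) (a : ℕ → ℝ) (c : ℕ → E) (n : ℕ) : Prop :=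
  ∀ k < n, EqOn f (fun _ ↦ c k) (Ioo (a k) (a (k + 1)))

namespace IsStepOn

variable {E : Type*} {f : ℝ → E} {a : ℕ → ℝ} {c : ℕ → E} {k m n : ℕ} {t : ℝ}

theorem mono (hf : IsStepOn f a c n) (hmn : m ≤ n) : IsStepOn f a c m :=
  fun k hk ↦ hf k (hk.trans_le hmn)

theorem eqOn_uIoo (hf : IsStepOn f a c n) (hk : k < n) (ht : t ∈ Icc (a k) (a (k + 1))) :
    EqOn f (fun _ ↦ c k) (uIoo (a k) t) := by
  rw [uIoo_of_le ht.1]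
  exact (hf k hk).mono (Ioo_subset_Ioo_right ht.2)

variable [NormedAddCommGroup E]

theorem intervalIntegrable_of_mem_Icc (hf : IsStepOn f a c n) (hk : k < n)
    (ht : t ∈ Icc (a k) (a (k + 1))) : IntervalIntegrable f volume (a k) t :=
  intervalIntegrable_const.congr_uIoo (hf.eqOn_uIoo hk ht).symm

theorem intervalIntegrable (hf : IsStepOn f a c n) (ha : Monotone a) :
    IntervalIntegrable f volume (a 0) (a n) :=
  IntervalIntegrable.trans_iterate fun k hk ↦
    hf.intervalIntegrable_of_mem_Icc hk (right_mem_Icc.2 (ha k.le_succ))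

variable [NormedSpace ℝ E] [CompleteSpace E]

theorem integral_eq_add_smul (hf : IsStepOn f a c n) (ha : Monotone a) (hk : k < n)
    (ht : t ∈ Icc (a k) (a (k + 1))) :
    ∫ s in a 0..t, f s = (∫ s in a 0..a k, f s) + (t - a k) • c k := by
  rw [← integral_add_adjacent_intervals ((hf.mono hk.le).intervalIntegrable ha)
    (hf.intervalIntegrable_of_mem_Icc hk ht), integral_congr_uIoo (hf.eqOn_uIoo hk ht),
    intervalIntegral.integral_const]

theorem integral_eq_sum (hf : IsStepOn f a c n) (ha : Monotone a) :
    ∫ s in a 0..a n, f s = ∑ k ∈ Finset.range n, (a (k + 1) - a k) • c k := by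
  induction n with
  | zero => simp
  | succ n ih =>
    rw [hf.integral_eq_add_smul ha n.lt_succ_self (right_mem_Icc.2 (ha n.le_succ)),
      ih (hf.mono n.le_succ), Finset.sum_range_succ]

theorem integral_mem_of_convex {K : Set E} (hf : IsStepOn f a c n) (ha : Monotone a)
    (hK : Convex ℝ K) (hnode : ∀ k ≤ n, ∫ s in a 0..a k, f s ∈ K) (ht : t ∈ Icc (a 0) (a n)) :
    ∫ s in a 0..t, f s ∈ K := by
  induction n with
  | zero =>
    obtain rfl : t = a 0 := by simpa using ht
    exact hnode 0 le_rfl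
  | succ n ih =>
    rcases le_total t (a n) with htn | hnt
    · exact ih (hf.mono n.le_succ) (fun k hk ↦ hnode k (hk.trans n.le_succ)) ⟨ht.1, htn⟩
    have affine {u : ℝ} (hu : u ∈ Icc (a n) (a (n + 1))) :
        ∫ s in a 0..u, f s = AffineMap.lineMap (∫ s in a 0..a n, f s)
          ((∫ s in a 0..a n, f s) + c n) (u - a n) := by
      rw [hf.integral_eq_add_smul ha n.lt_succ_self hu, AffineMap.lineMap_apply_module']
      simp [add_comm]
    have node_left := hnode n n.le_succ
    have node_right := hnode (n + 1) le_rfl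
    rw [affine (left_mem_Icc.2 (ha n.le_succ))] at node_left
    rw [affine (right_mem_Icc.2 (ha n.le_succ))] at node_right
    rw [affine ⟨hnt, ht.2⟩]
    exact (hK.affine_preimage _).ordConnected.out node_left node_right
      ⟨sub_le_sub_right hnt _, sub_le_sub_right ht.2 _⟩

end IsStepOn

section Alternating

variable {f : ℝ → ℝ} {h : ℝ} {n : ℕ}

theorem abs_integral_le_of_isStepOn_neg_one_pow
    (hf : IsStepOn f (fun k ↦ k * h) (fun k ↦ (-1) ^ k) n) (hh : 0 ≤ h) {t : ℝ}
    (ht : t ∈ Icc 0 (n * h)) : |∫ s in 0..t, f s| ≤ h := by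
  have mesh_mono : Monotone fun k : ℕ ↦ k * h := Nat.mono_cast.mul_const hh
  have node (k : ℕ) (hk : k ≤ n) : ∫ s in 0..k * h, f s ∈ Metric.closedBall 0 h := by
    have node_eq : ∫ s in 0..k * h, f s = h * ∑ i ∈ Finset.range k, (-1) ^ i := by
      rw [Finset.mul_sum]
      simpa [add_mul] using (hf.mono hk).integral_eq_sum mesh_mono
    rw [node_eq, mem_closedBall_zero_iff, norm_mul, Real.norm_of_nonneg hh]
    exact mul_le_of_le_one_right hh (norm_sum_neg_one_pow_le k)
  simpa using hf.integral_mem_of_convex mesh_mono (convex_closedBall 0 h) (by simpa using node)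
    (by simpa using ht)

theorem integral_sq_integral_le_of_isStepOn_neg_one_pow
    (hf : IsStepOn f (fun k ↦ k * h) (fun k ↦ (-1) ^ k) n) (hh : 0 ≤ h) :
    ∫ t in 0..n * h, (∫ s in 0..t, f s) ^ 2 ≤ n * h * h ^ 2 := by
  have horizon_nonneg : 0 ≤ n * h := by positivity
  calc
    _ ≤ ‖∫ t in 0..n * h, (∫ s in 0..t, f s) ^ 2‖ := Real.le_norm_self _
    _ ≤ h ^ 2 * |n * h - 0| := norm_integral_le_of_norm_le_const fun t ht ↦ by
      rw [uIoc_of_le horizon_nonneg] at ht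
      rw [norm_pow]
      gcongr
      exact abs_integral_le_of_isStepOn_neg_one_pow hf hh (Ioc_subset_Icc_self ht)
    _ = n * h * h ^ 2 := by rw [sub_zero, abs_of_nonneg horizon_nonneg, mul_comm]

end Alternating

/-- For the alternating controls `vⁿ` (equal to `(-1)^k` on
`[kT/n, (k+1)T/n)` for `0 ≤ k ≤ n-1`), the cost satisfies
`J(vⁿ) = ∫₀ᵀ (∫₀ᵗ vⁿ_s ds)² dt ≤ T³/n²`, and in particular `J(vⁿ) → 0`
as `n → ∞`. -/
theorem alternating_control_cost_bound (T : ℝ) (hT : 0 < T) (v : ℕ → ℝ → ℝ)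
    (hmeas : ∀ n, Measurable (v n))
    (hv : ∀ n : ℕ, 1 ≤ n → ∀ k < n,
      ∀ t ∈ Set.Ico ((k : ℝ) * T / n) (((k : ℝ) + 1) * T / n),
        v n t = (-1 : ℝ) ^ k) :
    (∀ n : ℕ, 1 ≤ n →
      (∫ t in (0 : ℝ)..T, (∫ s in (0 : ℝ)..t, v n s) ^ 2) ≤ T ^ 3 / n ^ 2) ∧
    Tendsto (fun n : ℕ => ∫ t in (0 : ℝ)..T, (∫ s in (0 : ℝ)..t, v n s) ^ 2)
      atTop (nhds 0) := by
  have cost_le (n : ℕ) (hn : 1 ≤ n) :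
      ∫ t in 0..T, (∫ s in 0..t, v n s) ^ 2 ≤ T ^ 3 / n ^ 2 := by
    have step : IsStepOn (v n) (fun k ↦ k * (T / n)) (fun k ↦ (-1) ^ k) n := fun k hk t ht ↦
      hv n hn k hk t (Ioo_subset_Ico_self (by simpa [mul_div_assoc] using ht))
    have horizon : n * (T / n) = T := mul_div_cancel₀ T (by positivity)
    calc
      _ ≤ T * (T / n) ^ 2 := by
        simpa only [horizon] using
          integral_sq_integral_le_of_isStepOn_neg_one_pow step (by positivity)
      _ = T ^ 3 / n ^ 2 := by ring
  have cost_nonneg (n : ℕ) : 0 ≤ ∫ t in 0..T, (∫ s in 0..t, v n s) ^ 2 :=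
    intervalIntegral.integral_nonneg hT.le fun _ _ ↦ sq_nonneg _
  exact ⟨cost_le, squeeze_zero' (.of_forall cost_nonneg) ((eventually_ge_atTop 1).mono cost_le)
    (tendsto_const_div_pow (T ^ 3) 2 two_ne_zero)⟩
end

section
/- Let T > 0. For every measurable function v : [0,T] → [-1,1], the cost J(v) = ∫₀ᵀ [ (∫₀ᵗ v_s ds)² + (1 - v_t²)² ] dt is strictly positive. In particular, this control problem has no optimal strict control: no measurable v : [0,T] → [-1,1] attains the infimum value 0 of the cost. -/
open MeasureTheory intervalIntegral Set
open scoped Interval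

/-!
If the cost vanished, the trajectory would vanish almost everywhere, hence everywhere by
continuity. Its derivative, which is almost everywhere the control, would then vanish too, and a
control equal to `0` pays the full price `(1 - 0²)² = 1` at almost every time.
-/

section Primitive

variable {E : Type*} [NormedAddCommGroup E] [NormedSpace ℝ E] {a b : ℝ}

lemma primitive_eqOn_zero_of_ae_eq_zero {f : ℝ → E} (hab : a ≠ b)
    (hf : IntervalIntegrable f volume a b)
    (hF : ∀ᵐ t ∂volume.restrict (Ι a b), ∫ s in a..t, f s = 0) :
    EqOn (fun t ↦ ∫ s in a..t, f s) 0 (uIcc a b) := by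
  refine Measure.eqOn_Icc_of_ae_eq volume (min_lt_max.2 hab).ne ?_
    (continuousOn_primitive_interval' hf left_mem_uIcc) continuousOn_const
  rwa [← restrict_Ioc_eq_restrict_Icc]

lemma ae_eq_zero_of_primitive_ae_eq_zero [CompleteSpace E] {f : ℝ → E}
    (hf : IntervalIntegrable f volume a b)
    (hF : ∀ᵐ t ∂volume.restrict (Ι a b), ∫ s in a..t, f s = 0) :
    f =ᵐ[volume.restrict (Ι a b)] 0 := by
  rcases eq_or_ne a b with rfl | hab
  · simp [Filter.EventuallyEq]
  have hF_zero := primitive_eqOn_zero_of_ae_eq_zero hab hf hF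
  have h_Ioo : f =ᵐ[volume.restrict (uIoo a b)] 0 := by
    refine (ae_restrict_iff' measurableSet_Ioo).2 ?_
    filter_upwards [hf.ae_hasDerivAt_integral] with t ht ht_mem
    have h_deriv : HasDerivAt (fun x ↦ ∫ s in a..x, f s) (f t) t :=
      ht (Ioo_subset_Icc_self ht_mem) a left_mem_uIcc
    have h_deriv_zero : HasDerivAt (fun x ↦ ∫ s in a..x, f s) 0 t :=
      (hasDerivAt_const t 0).congr_of_eventuallyEq <|
        hF_zero.eventuallyEq_of_mem (Icc_mem_nhds ht_mem.1 ht_mem.2)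
    exact h_deriv.unique h_deriv_zero
  exact ae_restrict_of_ae_eq_of_ae_restrict Ioo_ae_eq_Ioc h_Ioo

lemma integral_runningCost_pos [CompleteSpace E] {ℓ : E → E → ℝ} {v : ℝ → E} (hab : a < b)
    (hℓ_nonneg : ∀ x u, 0 ≤ ℓ x u) (hℓ_zero : ∀ x u, ℓ x u = 0 → x = 0 ∧ u ≠ 0)
    (hv : IntervalIntegrable v volume a b)
    (hℓ_int : IntervalIntegrable (fun t ↦ ℓ (∫ s in a..t, v s) (v t)) volume a b) :
    0 < ∫ t in a..b, ℓ (∫ s in a..t, v s) (v t) := by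
  refine (integral_nonneg hab.le fun t _ ↦ hℓ_nonneg _ _).lt_of_ne' fun h_cost ↦ ?_
  have hℓ_ae : ∀ᵐ t ∂volume.restrict (Ι a b), ℓ (∫ s in a..t, v s) (v t) = 0 := by
    rw [uIoc_of_le hab.le]
    exact (integral_eq_zero_iff_of_le_of_nonneg_ae hab.le
      (.of_forall fun t ↦ hℓ_nonneg _ _) hℓ_int).1 h_cost
  have hv_zero : ∀ᵐ t ∂volume.restrict (Ι a b), v t = 0 :=
    ae_eq_zero_of_primitive_ae_eq_zero hv (hℓ_ae.mono fun t ht ↦ (hℓ_zero _ _ ht).1)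
  have : (ae (volume.restrict (Ι a b))).NeBot :=
    ae_restrict_neBot.2 (by simpa [uIoc_of_le hab.le] using hab)
  obtain ⟨t, ht, ht_zero⟩ := (hℓ_ae.and hv_zero).exists
  exact (hℓ_zero _ _ ht).2 ht_zero

end Primitive

lemma integrable_one_sub_sq_sq {α : Type*} [MeasurableSpace α] {μ : Measure α} [IsFiniteMeasure μ]
    {f : α → ℝ} (hf : MemLp f 4 μ) : Integrable (fun x ↦ (1 - f x ^ 2) ^ 2) μ := by
  have hf_sq : MemLp (fun x ↦ f x ^ 2) 2 μ := by
    refine (memLp_two_iff_integrable_sq (hf.aestronglyMeasurable.pow 2)).2 ?_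
    simpa [← pow_mul, Even.pow_abs ⟨2, rfl⟩] using hf.integrable_norm_pow (p := 4) four_ne_zero
  exact ((memLp_const 1).sub hf_sq).integrable_sq

theorem cost_second_example_pos_general {T : ℝ} (hT : 0 < T) {v : ℝ → ℝ}
    (hv : MemLp v 4 (volume.restrict (Ioc 0 T))) :
    0 < ∫ t in (0 : ℝ)..T, ((∫ s in (0 : ℝ)..t, v s) ^ 2 + (1 - (v t) ^ 2) ^ 2) := by
  have hv_int : IntervalIntegrable v volume 0 T :=
    (intervalIntegrable_iff_integrableOn_Ioc_of_le hT.le).2 (hv.integrable (by norm_num))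
  have h_state : IntervalIntegrable (fun t ↦ (∫ s in (0 : ℝ)..t, v s) ^ 2) volume 0 T :=
    ((continuousOn_primitive_interval' hv_int left_mem_uIcc).pow 2).intervalIntegrable
  have h_control : IntervalIntegrable (fun t ↦ (1 - v t ^ 2) ^ 2) volume 0 T :=
    (intervalIntegrable_iff_integrableOn_Ioc_of_le hT.le).2 (integrable_one_sub_sq_sq hv)
  refine integral_runningCost_pos (ℓ := fun x u ↦ x ^ 2 + (1 - u ^ 2) ^ 2) hT
    (fun x u ↦ by positivity) (fun x u h ↦ ?_) hv_int (h_state.add h_control)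
  obtain ⟨hx, hu⟩ := (add_eq_zero_iff_of_nonneg (sq_nonneg x) (sq_nonneg (1 - u ^ 2))).1 h
  exact ⟨pow_eq_zero_iff two_ne_zero |>.1 hx, by rintro rfl; norm_num at hu⟩

/-- For every measurable strict control `v : [0,T] → [-1,1]`, the
cost `J(v) = ∫₀ᵀ [ (∫₀ᵗ v_s ds)² + (1 - v_t²)² ] dt` is strictly positive;
hence no strict control attains the infimum value `0` of the cost. -/
theorem cost_second_example_pos (T : ℝ) (hT : 0 < T) (v : ℝ → ℝ)
    (hv : Measurable v) (hval : ∀ t ∈ Set.Icc (0 : ℝ) T, v t ∈ Set.Icc (-1 : ℝ) 1) :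
    0 < ∫ t in (0 : ℝ)..T,
        ((∫ s in (0 : ℝ)..t, v s) ^ 2 + (1 - (v t) ^ 2) ^ 2) :=
  cost_second_example_pos_general hT <| .of_bound hv.aestronglyMeasurable 1 <|
    ae_restrict_of_forall_mem measurableSet_Ioc fun t ht ↦
      abs_le.2 (hval t (Ioc_subset_Icc_self ht))
end
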